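/- arXiv:1005.0670 — 5 statements merged into one kernel-verified Lean document; each statement's English description precedes it below -/
import Mathlib

section
/- Let x be a real number with 0 < x ≤ 1 and for each natural number i set r_i = 13·2^{i/2}. Then for every natural number k, ∏_{i=0}^{k} (1 + x/r_i) ≤ 1 + x/3. -/
theorem prod_one_add_le (x : ℝ) (hx0 : 0 < x) (hx1 : x ≤ 1) (k : ℕ) :
    ∏ i ∈ Finset.range (k + 1), (1 + x / (13 * Real.sqrt 2 ^ i)) ≤ 1 + x / 3 := by
  have hs : Real.sqrt 2 * Real.sqrt 2 = 2 := Real.mul_self_sqrt (by norm_num)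
  have hpos : 0 < Real.sqrt 2 := by positivity
  have hlt : Real.sqrt 2 ≤ 1.415 := by
    nlinarith
  have key : ∀ n : ℕ, ∏ i ∈ Finset.range n, (1 + x / (13 * Real.sqrt 2 ^ i)) ≤
      Real.exp (x / 13 * ((2 + Real.sqrt 2) * (1 - (1 / Real.sqrt 2) ^ n))) := by
    intro n
    induction n with
    | zero => simp
    | succ n ih =>
      rw [Finset.prod_range_succ]
      have h1 : 1 + x / (13 * Real.sqrt 2 ^ n) ≤ Real.exp (x / (13 * Real.sqrt 2 ^ n)) := by
        linarith [Real.add_one_le_exp (x / (13 * Real.sqrt 2 ^ n))]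
      refine (mul_le_mul ih h1 (by positivity) (Real.exp_pos _).le).trans (le_of_eq ?_)
      rw [← Real.exp_add]
      congr 1
      have hq : (2 + Real.sqrt 2) * (1 - 1 / Real.sqrt 2) = 1 := by
        field_simp
        nlinarith
      have e : x / (13 * Real.sqrt 2 ^ n) = x / 13 * (1 / Real.sqrt 2) ^ n := by
        rw [one_div, inv_pow]
        field_simp
      rw [e, pow_succ]
      linear_combination (-(x / 13 * (1 / Real.sqrt 2) ^ n)) * hq
  refine (key (k + 1)).trans ?_
  have hle : x / 13 * ((2 + Real.sqrt 2) * (1 - (1 / Real.sqrt 2) ^ (k + 1))) ≤ 0.2627 * x := by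
    have hp : 0 ≤ (1 / Real.sqrt 2) ^ (k + 1) := by positivity
    have h2 : (2 + Real.sqrt 2) * (1 - (1 / Real.sqrt 2) ^ (k + 1)) ≤ 3.415 := by
      nlinarith [mul_nonneg hpos.le hp]
    have := mul_le_mul_of_nonneg_left h2 (by positivity : 0 ≤ x / 13)
    linarith
  refine (Real.exp_le_exp.mpr hle).trans ?_
  have hb := Real.abs_exp_sub_one_sub_id_le (x := 0.2627 * x)
    (by rw [abs_of_nonneg (by positivity)]; linarith)
  have := (abs_le.mp hb).2
  nlinarith
end

section
/- Let x be a real number with 0 < x ≤ 1 and for each natural number i set r_i = 13·2^{i/2}. Then for every natural number k, ∏_{i=0}^{k} (1 − x/r_i) ≥ 1 − x/3. -/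
theorem prod_one_sub_ge_aux (x q : ℝ) (hx0 : 0 < x) (hx1 : x ≤ 1) (hq0 : 0 < q)
    (hq : q ≤ 10 / 13) (n : ℕ) :
    1 - x / 3 + x / 3 * q ^ n ≤ ∏ i ∈ Finset.range n, (1 - x / 13 * q ^ i) := by
  induction n with
  | zero => simp
  | succ n ih =>
    rw [Finset.prod_range_succ, pow_succ]
    have ht0 : 0 < q ^ n := pow_pos hq0 n
    have ht1 : q ^ n ≤ 1 := pow_le_one₀ hq0.le (by linarith)
    generalize q ^ n = t at *
    have hxt : 0 < x * t := mul_pos hx0 ht0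
    have hxt1 : x * t ≤ x := by nlinarith
    have h1 : 0 ≤ 1 - x / 13 * t := by linarith
    refine le_trans ?_ (mul_le_mul_of_nonneg_right ih h1)
    have h2 : x * t * q ≤ x * t * (10 / 13) := mul_le_mul_of_nonneg_left hq hxt.le
    have h3 : 0 ≤ (x - x * t) * (x * t) := mul_nonneg (by linarith) hxt.le
    nlinarith

theorem prod_one_sub_ge (x : ℝ) (hx0 : 0 < x) (hx1 : x ≤ 1) (k : ℕ) :
    ∏ i ∈ Finset.range (k + 1), (1 - x / (13 * Real.sqrt 2 ^ i)) ≥ 1 - x / 3 := by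
  have hs : (13 / 10 : ℝ) ≤ Real.sqrt 2 := Real.le_sqrt_of_sq_le (by norm_num)
  have hq0 : 0 < (Real.sqrt 2)⁻¹ := by positivity
  have hq : (Real.sqrt 2)⁻¹ ≤ 10 / 13 := by
    have := inv_anti₀ (by norm_num) hs
    norm_num at this ⊢
    exact this
  have h := prod_one_sub_ge_aux x _ hx0 hx1 hq0 hq (k + 1)
  have he : ∏ i ∈ Finset.range (k + 1), (1 - x / (13 * Real.sqrt 2 ^ i))
      = ∏ i ∈ Finset.range (k + 1), (1 - x / 13 * (Real.sqrt 2)⁻¹ ^ i) := by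
    refine Finset.prod_congr rfl fun i _ => ?_
    rw [inv_pow, ← div_div, div_eq_mul_inv (x / 13)]
  rw [he]
  have : 0 ≤ x / 3 * (Real.sqrt 2)⁻¹ ^ (k + 1) := by positivity
  linarith
end

section
/- Let j ≤ K be natural numbers and let ε be a real number with 0 < ε ≤ 1. Let x_j, …, x_K, f_j, …, f_K and y_K be nonnegative real numbers satisfying y_K + f_K = x_K, and suppose that for every i with j ≤ i ≤ K−1 we have 2·x_{i+1} + f_i ≤ (1 + ε/(13·2^{i/2}))·x_i. Then 2^{K−j}·y_K + ∑_{i=j}^{K} 2^{i−j}·f_i ≤ (1 + (ε/3)·2^{−j/2})·x_j. -/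
theorem tele_coef (j : ℕ) (ε : ℝ) (hε0 : 0 < ε) (hε1 : ε ≤ 1) :
    (1 + (ε / 3) / Real.sqrt 2 ^ (j + 1)) * (1 + ε / (13 * Real.sqrt 2 ^ j)) ≤
      1 + (ε / 3) / Real.sqrt 2 ^ j := by
  have hs : (1 : ℝ) ≤ Real.sqrt 2 := Real.one_le_sqrt.mpr (by norm_num)
  have hs2 : (7 / 5 : ℝ) ≤ Real.sqrt 2 := Real.le_sqrt_of_sq_le (by norm_num)
  have hp : (1 : ℝ) ≤ Real.sqrt 2 ^ j := one_le_pow₀ hs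
  obtain ⟨r, hr⟩ : ∃ r, r = (Real.sqrt 2)⁻¹ := ⟨_, rfl⟩
  obtain ⟨b, hb⟩ : ∃ b, b = ε * (Real.sqrt 2 ^ j)⁻¹ := ⟨_, rfl⟩
  have hr0 : 0 ≤ r := by rw [hr]; positivity
  have hr1 : r ≤ 5 / 7 := by
    rw [hr, inv_le_comm₀ (by positivity) (by norm_num)]
    linarith
  have hb0 : 0 ≤ b := by rw [hb]; positivity
  have hb1 : b ≤ 1 := by
    rw [hb]
    exact mul_le_one₀ hε1 (by positivity) (inv_le_one_of_one_le₀ hp)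
  have e1 : (ε / 3) / Real.sqrt 2 ^ (j + 1) = b * r / 3 := by
    rw [hb, hr, pow_succ]; field_simp
  have e2 : ε / (13 * Real.sqrt 2 ^ j) = b / 13 := by
    rw [hb]; field_simp
  have e3 : (ε / 3) / Real.sqrt 2 ^ j = b / 3 := by
    rw [hb]; field_simp
  rw [e1, e2, e3]
  have h1 : b * r ≤ r := mul_le_of_le_one_left hr0 hb1
  have h2 : 0 ≤ b * (10 - 13 * r - b * r) := mul_nonneg hb0 (by linarith)
  nlinarith

theorem telescoping_upper_bound (j K : ℕ) (hjK : j ≤ K) (ε : ℝ) (hε0 : 0 < ε) (hε1 : ε ≤ 1)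
    (x f : ℕ → ℝ) (y : ℝ)
    (hx : ∀ i, j ≤ i → i ≤ K → 0 ≤ x i)
    (hf : ∀ i, j ≤ i → i ≤ K → 0 ≤ f i)
    (hy : 0 ≤ y)
    (hsum : y + f K = x K)
    (hstep : ∀ i, j ≤ i → i < K →
      2 * x (i + 1) + f i ≤ (1 + ε / (13 * Real.sqrt 2 ^ i)) * x i) :
    (2 : ℝ) ^ (K - j) * y + ∑ i ∈ Finset.Icc j K, (2 : ℝ) ^ (i - j) * f i ≤
      (1 + (ε / 3) / Real.sqrt 2 ^ j) * x j := by
  obtain ⟨n, hn⟩ : ∃ n, K = j + n := ⟨K - j, by omega⟩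
  induction n generalizing j with
  | zero =>
    have : K = j := by omega
    subst this
    have h0 := hx K le_rfl le_rfl
    have h1 : 0 ≤ (ε / 3) / Real.sqrt 2 ^ K * x K := by positivity
    simp
    linarith
  | succ n ih =>
    have h := ih (j + 1) (by omega) (fun i hi => hx i (by omega)) (fun i hi => hf i (by omega))
      (fun i hi => hstep i (by omega)) (by omega)
    have hI : Finset.Icc j K = insert j (Finset.Icc (j + 1) K) := by
      ext i; simp only [Finset.mem_Icc, Finset.mem_insert]; omega
    have hS : ∑ i ∈ Finset.Icc (j + 1) K, (2 : ℝ) ^ (i - j) * f i =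
        2 * ∑ i ∈ Finset.Icc (j + 1) K, (2 : ℝ) ^ (i - (j + 1)) * f i := by
      rw [Finset.mul_sum]
      refine Finset.sum_congr rfl fun i hi => ?_
      rw [Finset.mem_Icc] at hi
      rw [show i - j = (i - (j + 1)) + 1 by omega, pow_succ]
      ring
    rw [hI, Finset.sum_insert (by simp), hS, show K - j = (K - (j + 1)) + 1 by omega, pow_succ]
    have hc : 0 ≤ (ε / 3) / Real.sqrt 2 ^ (j + 1) := by positivity
    have hfj := hf j le_rfl hjK
    have hst := mul_le_mul_of_nonneg_left (hstep j le_rfl (by omega))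
      (show 0 ≤ 1 + (ε / 3) / Real.sqrt 2 ^ (j + 1) by linarith)
    have hco := mul_le_mul_of_nonneg_right (tele_coef j ε hε0 hε1) (hx j le_rfl hjK)
    have hcf := mul_nonneg hc hfj
    simp only [Nat.sub_self, pow_zero, one_mul]
    linarith
end

section
/- Let j ≤ K be natural numbers and let ε be a real number with 0 < ε ≤ 1. Let x_j, …, x_K, f_j, …, f_K and y_K be nonnegative real numbers satisfying y_K + f_K = x_K, and suppose that for every i with j ≤ i ≤ K−1 we have 2·x_{i+1} + f_i ≥ (1 − ε/(13·2^{i/2}))·x_i. Then 2^{K−j}·y_K + ∑_{i=j}^{K} 2^{i−j}·f_i ≥ (1 − (ε/3)·2^{−j/2})·x_j. -/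
theorem telescoping_lower_bound (j K : ℕ) (hjK : j ≤ K) (ε : ℝ) (hε0 : 0 < ε) (hε1 : ε ≤ 1)
    (x f : ℕ → ℝ) (y : ℝ)
    (hx : ∀ i, j ≤ i → i ≤ K → 0 ≤ x i)
    (hf : ∀ i, j ≤ i → i ≤ K → 0 ≤ f i)
    (hy : 0 ≤ y)
    (hsum : y + f K = x K)
    (hstep : ∀ i, j ≤ i → i < K →
      2 * x (i + 1) + f i ≥ (1 - ε / (13 * Real.sqrt 2 ^ i)) * x i) :
    (2 : ℝ) ^ (K - j) * y + ∑ i ∈ Finset.Icc j K, (2 : ℝ) ^ (i - j) * f i ≥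
      (1 - (ε / 3) / Real.sqrt 2 ^ j) * x j := by
  induction hjK using Nat.decreasingInduction with
  | self =>
    have h0 : 0 ≤ (ε / 3) / Real.sqrt 2 ^ K := by positivity
    have hK := hx K le_rfl le_rfl
    simp only [Nat.sub_self, pow_zero, Finset.Icc_self, Finset.sum_singleton]
    nlinarith [mul_nonneg h0 hK]
  | of_succ j hj ih =>
    have ih' := ih (fun i h1 h2 => hx i (by omega) h2) (fun i h1 h2 => hf i (by omega) h2)
      (fun i h1 h2 => hstep i (by omega) h2)
    have hs := hstep j le_rfl hj
    have hxj := hx j le_rfl hj.le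
    have hfj := hf j le_rfl hj.le
    have hL : (2 : ℝ) ^ (K - j) * y + ∑ i ∈ Finset.Icc j K, (2 : ℝ) ^ (i - j) * f i =
        f j + 2 * ((2 : ℝ) ^ (K - (j + 1)) * y +
          ∑ i ∈ Finset.Icc (j + 1) K, (2 : ℝ) ^ (i - (j + 1)) * f i) := by
      have e : Finset.Icc j K = insert j (Finset.Icc (j + 1) K) := by
        ext a
        simp only [Finset.mem_Icc, Finset.mem_insert]
        omega
      rw [e, Finset.sum_insert (by simp), mul_add, Finset.mul_sum]
      have e2 : ∑ i ∈ Finset.Icc (j + 1) K, (2 : ℝ) ^ (i - j) * f i =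
          ∑ i ∈ Finset.Icc (j + 1) K, 2 * ((2 : ℝ) ^ (i - (j + 1)) * f i) := by
        refine Finset.sum_congr rfl fun i hi => ?_
        have := (Finset.mem_Icc.mp hi).1
        rw [show i - j = (i - (j + 1)) + 1 by omega, pow_succ]
        ring
      rw [e2, show K - j = (K - (j + 1)) + 1 by omega, pow_succ]
      simp
      ring
    rw [hL]
    have hs2 : Real.sqrt 2 ^ 2 = 2 := Real.sq_sqrt (by norm_num)
    have hsl : (1.4 : ℝ) ≤ Real.sqrt 2 := Real.le_sqrt_of_sq_le (by norm_num)
    have hinv : (Real.sqrt 2)⁻¹ ≤ 10 / 14 := by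
      rw [inv_le_comm₀ (by positivity) (by norm_num)]
      linarith
    have hp : 1 ≤ Real.sqrt 2 ^ j := one_le_pow₀ (by linarith)
    have hu0 : 0 < ε / Real.sqrt 2 ^ j := by positivity
    have hu1 : ε / Real.sqrt 2 ^ j ≤ 1 := by
      rw [div_le_one (by positivity)]
      linarith
    have e1 : ε / 3 / Real.sqrt 2 ^ (j + 1) = ε / Real.sqrt 2 ^ j / 3 * (Real.sqrt 2)⁻¹ := by
      rw [pow_succ]
      field_simp
    have e2 : ε / (13 * Real.sqrt 2 ^ j) = ε / Real.sqrt 2 ^ j / 13 := by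
      field_simp
    have e3 : ε / 3 / Real.sqrt 2 ^ j = ε / Real.sqrt 2 ^ j / 3 := by
      field_simp
    rw [e1] at ih'
    rw [e2] at hs
    rw [e3]
    generalize ε / Real.sqrt 2 ^ j = u at *
    have hc0 : 0 ≤ u / 3 * (Real.sqrt 2)⁻¹ := by positivity
    have hc1 : u / 3 * (Real.sqrt 2)⁻¹ ≤ u / 3 * (10 / 14) := by gcongr
    generalize u / 3 * (Real.sqrt 2)⁻¹ = c at *
    have a1 : 0 ≤ (1 - c) * (2 * x (j + 1) + f j - (1 - u / 13) * x j) :=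
      mul_nonneg (by linarith) (by linarith)
    have a2 : 0 ≤ c * f j := mul_nonneg hc0 hfj
    have a3 : 0 ≤ (u / 3 - c - u / 13) * x j := mul_nonneg (by linarith) hxj
    have a4 : 0 ≤ c * u * x j := by positivity
    nlinarith
end

section
/- Let V be a finite vertex set, let j ≤ K be natural numbers, and let ε be a real number with 0 < ε ≤ 1. For each i with j ≤ i ≤ K let X_i and F_i be finite sets of edges on V, and let Y_K be a finite set of edges on V, such that X_K is the disjoint union of F_K and Y_K. Suppose that for every subset S ⊆ V and every i with j ≤ i ≤ K−1, |2·c(X_{i+1},S) + c(F_i,S) − c(X_i,S)| ≤ (ε/(13·2^{i/2}))·c(X_i,S). Then for every subset S ⊆ V, |∑_{i=j}^{K} 2^{i−j}·c(F_i,S) + 2^{K−j}·c(Y_K,S) − c(X_j,S)| ≤ (ε/3)·2^{−j/2}·c(X_j,S). -/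
open Classical in
/-- The number of edges of `E` crossing the cut determined by `S`,
viewed as a real number. -/
noncomputable def cutCount {V : Type*} [Fintype V] [DecidableEq V]
    (E : Finset (Sym2 V)) (S : Finset V) : ℝ :=
  (E.filter (fun e => ∃ u v, e = s(u, v) ∧ u ∈ S ∧ v ∉ S)).card

theorem accum_aux (ε : ℝ) (hε0 : 0 < ε) (hε1 : ε ≤ 1) (x f : ℕ → ℝ) (y : ℝ)
    (hx : ∀ i, 0 ≤ x i) (hf : ∀ i, 0 ≤ f i) (d : ℕ) :
    ∀ j : ℕ, x (j + d) = f (j + d) + y →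
    (∀ i, j ≤ i → i < j + d →
      |2 * x (i + 1) + f i - x i| ≤ (ε / (13 * Real.sqrt 2 ^ i)) * x i) →
    |(∑ k ∈ Finset.range (d + 1), (2 : ℝ) ^ k * f (j + k)) + (2 : ℝ) ^ d * y - x j| ≤
      (ε / 3) / Real.sqrt 2 ^ j * x j := by
  induction d with
  | zero =>
    intro j h _
    have h0 : x j = f j + y := by simpa using h
    have : 0 ≤ (ε / 3) / Real.sqrt 2 ^ j * x j := mul_nonneg (by positivity) (hx j)
    simpa [h0] using this
  | succ d ih =>
    intro j h hs
    have e : j + (d + 1) = j + 1 + d := by omega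
    have h1 := ih (j + 1) (by rw [← e]; exact h) (fun i hi hi' => hs i (by omega) (by omega))
    have h2 := hs j le_rfl (by omega)
    rw [Finset.sum_range_succ']
    set T := (∑ k ∈ Finset.range (d + 1), (2 : ℝ) ^ k * f (j + 1 + k)) + (2 : ℝ) ^ d * y with hT
    have e2 : (∑ k ∈ Finset.range (d + 1), (2 : ℝ) ^ (k + 1) * f (j + (k + 1)))
        + 2 ^ 0 * f (j + 0) + (2 : ℝ) ^ (d + 1) * y = 2 * T + f j := by
      rw [hT, mul_add, Finset.mul_sum]
      have : ∀ k ∈ Finset.range (d + 1), (2 : ℝ) ^ (k + 1) * f (j + (k + 1))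
          = 2 * ((2 : ℝ) ^ k * f (j + 1 + k)) := by
        intro k _
        rw [show j + (k + 1) = j + 1 + k by omega]; ring
      rw [Finset.sum_congr rfl this]
      simp only [add_zero]
      ring
    rw [e2]
    have hr0 : (0 : ℝ) < Real.sqrt 2 := by positivity
    have hr2 : Real.sqrt 2 * Real.sqrt 2 = 2 := Real.mul_self_sqrt (by norm_num)
    have hr1 : (1.41 : ℝ) ≤ Real.sqrt 2 := Real.le_sqrt_of_sq_le (by norm_num)
    have hp : 1 ≤ Real.sqrt 2 ^ j := one_le_pow₀ (by linarith)
    set q := (Real.sqrt 2 ^ j)⁻¹ with hq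
    have hq0 : 0 < q := by positivity
    have hq1 : q ≤ 1 := inv_le_one_of_one_le₀ hp
    set s := (Real.sqrt 2)⁻¹ with hs'
    have hs0 : 0 < s := by positivity
    have hs1 : s ≤ 100 / 141 := by
      rw [hs', inv_le_comm₀ hr0 (by norm_num)]; norm_num at hr1 ⊢; exact hr1
    have c1 : ε / (13 * Real.sqrt 2 ^ j) = ε * q / 13 := by
      rw [hq]; field_simp
    have c2 : (ε / 3) / Real.sqrt 2 ^ (j + 1) = ε * q * s / 3 := by
      rw [hq, hs', pow_succ]; field_simp
    have c3 : (ε / 3) / Real.sqrt 2 ^ j = ε * q / 3 := by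
      rw [hq]; field_simp
    rw [c2] at h1
    rw [c1] at h2
    rw [c3]
    have hε : ε * q ≤ 1 := by nlinarith
    have hε' : 0 < ε * q := by positivity
    generalize ε * q = t at *
    have hxj := hx j
    have hfj := hf j
    have k1 : 2 * x (j + 1) ≤ (1 + 1 / 13) * x j := by
      have := (abs_le.mp h2).2
      nlinarith [mul_nonneg (sub_nonneg.2 hε) hxj]
    have k2 : t * s / 3 * (2 * x (j + 1)) ≤ t * (100 / 141) / 3 * ((1 + 1 / 13) * x j) := by
      have := hx (j + 1)
      gcongr
    have k3 := mul_nonneg hε'.le hxj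
    rw [abs_le] at *
    constructor <;> nlinarith [h1.1, h1.2, h2.1, h2.2]

theorem cut_approx_accumulates {V : Type*} [Fintype V] [DecidableEq V]
    (j K : ℕ) (hjK : j ≤ K) (ε : ℝ) (hε0 : 0 < ε) (hε1 : ε ≤ 1)
    (X F : ℕ → Finset (Sym2 V)) (Y : Finset (Sym2 V))
    (hXd : ∀ i, j ≤ i → i ≤ K → ∀ e ∈ X i, ¬ e.IsDiag)
    (hFd : ∀ i, j ≤ i → i ≤ K → ∀ e ∈ F i, ¬ e.IsDiag)
    (hYd : ∀ e ∈ Y, ¬ e.IsDiag)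
    (hdisj : Disjoint (F K) Y)
    (hunion : X K = F K ∪ Y)
    (hstep : ∀ S : Finset V, ∀ i, j ≤ i → i < K →
      |2 * cutCount (X (i + 1)) S + cutCount (F i) S - cutCount (X i) S| ≤
        (ε / (13 * Real.sqrt 2 ^ i)) * cutCount (X i) S) :
    ∀ S : Finset V,
      |(∑ i ∈ Finset.Icc j K, (2 : ℝ) ^ (i - j) * cutCount (F i) S) +
          (2 : ℝ) ^ (K - j) * cutCount Y S - cutCount (X j) S| ≤
        (ε / 3) / Real.sqrt 2 ^ j * cutCount (X j) S := by
  intro S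
  have hn : ∀ E : Finset (Sym2 V), 0 ≤ cutCount E S := fun E => Nat.cast_nonneg _
  have hu : cutCount (X K) S = cutCount (F K) S + cutCount Y S := by
    rw [hunion]
    unfold cutCount
    rw [Finset.filter_union, Finset.card_union_of_disjoint (Finset.disjoint_filter_filter hdisj)]
    push_cast
    rfl
  obtain ⟨d, rfl⟩ := Nat.exists_eq_add_of_le hjK
  have := accum_aux ε hε0 hε1 (fun i => cutCount (X i) S) (fun i => cutCount (F i) S)
    (cutCount Y S) (fun i => hn _) (fun i => hn _) d j hu (fun i h h' => hstep S i h h')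
  have e : ∑ i ∈ Finset.Icc j (j + d), (2 : ℝ) ^ (i - j) * cutCount (F i) S
      = ∑ k ∈ Finset.range (d + 1), (2 : ℝ) ^ k * cutCount (F (j + k)) S := by
    rw [← Finset.Ico_add_one_right_eq_Icc, Finset.sum_Ico_eq_sum_range,
      show j + d + 1 - j = d + 1 by omega]
    simp
  rw [e, Nat.add_sub_cancel_left]
  exact this
end
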